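/- Let E and F be nonempty convex sets in ℝⁿ such that every vector u ∈ ℝⁿ is uniquely expressible as u = y + z with y ∈ E, z ∈ F, and y · z = 0 (uniqueness meaning: if u = y₁ + z₁ = y₂ + z₂ with y₁, y₂ ∈ E, z₁, z₂ ∈ F, y₁ · z₁ = 0 and y₂ · z₂ = 0, then y₁ = y₂ and z₁ = z₂). Then E and F are both convex cones: for every λ ≥ 0, λu ∈ E whenever u ∈ E, and λu ∈ F whenever u ∈ F. -/

import Mathlib

open RealInnerProductSpace Pointwise

/-- The (negative) polar set of `X`. -/
def polarSet {n : ℕ} (X : Set (EuclideanSpace ℝ (Fin n))) : Set (EuclideanSpace ℝ (Fin n)) :=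
  {x | ∀ e ∈ X, ⟪x, e⟫ ≤ 0}

theorem cones_of_unique_orthogonal_decomposition
    (n : ℕ) (E F : Set (EuclideanSpace ℝ (Fin n)))
    (hEne : E.Nonempty) (hEconv : Convex ℝ E)
    (hFne : F.Nonempty) (hFconv : Convex ℝ F)
(hex : ∀ u : EuclideanSpace ℝ (Fin n), ∃ y ∈ E, ∃ z ∈ F, ⟪y, z⟫ = 0 ∧ u = y + z)
    (huniq : ∀ u y₁ z₁ y₂ z₂ : EuclideanSpace ℝ (Fin n),
      y₁ ∈ E → z₁ ∈ F → y₂ ∈ E → z₂ ∈ F →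
      ⟪y₁, z₁⟫ = 0 → ⟪y₂, z₂⟫ = 0 →
      u = y₁ + z₁ → u = y₂ + z₂ → y₁ = y₂ ∧ z₁ = z₂) :
    (∀ l : ℝ, 0 ≤ l → ∀ u ∈ E, l • u ∈ E) ∧
      (∀ l : ℝ, 0 ≤ l → ∀ u ∈ F, l • u ∈ F) := by
  have h0 : (0 : EuclideanSpace ℝ (Fin n)) ∈ E ∧ (0 : EuclideanSpace ℝ (Fin n)) ∈ F := by
    obtain ⟨y, hy, z, hz, hyz, h⟩ := hex 0
    have hzy : z = -y := (neg_eq_of_add_eq_zero_right h.symm).symm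
    have hy0 : y = 0 := by
      rw [hzy, inner_neg_right, neg_eq_zero] at hyz
      exact inner_self_eq_zero.mp hyz
    subst hy0
    rw [neg_zero] at hzy
    subst hzy
    exact ⟨hy, hz⟩
  obtain ⟨hE0, hF0⟩ := h0
  have key : ∀ l : ℝ, 1 < l → ∀ u y z : EuclideanSpace ℝ (Fin n), y ∈ E → z ∈ F →
      ⟪y, z⟫ = 0 → l • u = y + z →
      l⁻¹ • y ∈ E ∧ l⁻¹ • z ∈ F ∧ ⟪l⁻¹ • y, l⁻¹ • z⟫ = 0 ∧ u = l⁻¹ • y + l⁻¹ • z := by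
    intro l hl u y z hy hz hyz h
    have hpos : 0 < l := by linarith
    have hi : l⁻¹ ∈ Set.Icc (0 : ℝ) 1 := ⟨by positivity, inv_le_one_of_one_le₀ hl.le⟩
    refine ⟨hEconv.smul_mem_of_zero_mem hE0 hy hi, hFconv.smul_mem_of_zero_mem hF0 hz hi, ?_, ?_⟩
    · rw [real_inner_smul_left, real_inner_smul_right, hyz]; simp
    · rw [← smul_add, ← h, inv_smul_smul₀ hpos.ne']
  constructor
  · intro l hl u hu
    rcases le_or_gt l 1 with h1 | h1
    · exact hEconv.smul_mem_of_zero_mem hE0 hu ⟨hl, h1⟩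
    · obtain ⟨y, hy, z, hz, hyz, h⟩ := hex (l • u)
      obtain ⟨a, b, c, d⟩ := key l h1 u y z hy hz hyz h
      have := (huniq u _ _ u 0 a b hu hF0 c (inner_zero_right _) d (add_zero u).symm).1
      rw [← this, smul_inv_smul₀ (by linarith)]
      exact hy
  · intro l hl u hu
    rcases le_or_gt l 1 with h1 | h1
    · exact hFconv.smul_mem_of_zero_mem hF0 hu ⟨hl, h1⟩
    · obtain ⟨y, hy, z, hz, hyz, h⟩ := hex (l • u)
      obtain ⟨a, b, c, d⟩ := key l h1 u y z hy hz hyz h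
      have := (huniq u _ _ 0 u a b hE0 hu c (inner_zero_left _) d (zero_add u).symm).2
      rw [← this, smul_inv_smul₀ (by linarith)]
      exact hz
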